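/- For all μ ∈ [0, 1) and all a ∈ [0, 1], [(2μ² − a² − 1)(1 − aμ) + 2μ²(1 − μ²)] · exp(aμ/(1 − μ²)) − [(2μ² − a² − 1)(1 + aμ) + 2μ²(1 − μ²)] · exp(−aμ/(1 − μ²)) ≥ 0. -/

import Mathlib

/-!
Put `p = 2μ² - a² - 1`, `s = 1 - μ²`, `q = 2μ²s` and `x = aμ / s`. Half of the left-hand side is
`(p + q) sinh x - p s (x cosh x)`, and `x cosh x` lies between `sinh x` and `(1 + x) sinh x`.
If `p ≤ 0`, the lower bound leaves the coefficient `p + q - p s = μ² (1 - a²) ≥ 0` of `sinh x`.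
If `p ≥ 0`, then `a² ≤ 2μ² - 1 ≤ μ²`, so `s (1 + x) = 1 - μ² + aμ ≤ 1`, and the upper bound leaves
at least `q ≥ 0`.
-/

open Real

lemma sinh_le_mul_cosh {x : ℝ} (hx : 0 ≤ x) : sinh x ≤ x * cosh x := by
  have deriv_le : ∀ y ∈ interior (Set.Icc 0 x), deriv sinh y ≤ cosh x := by
    intro y hy
    obtain ⟨hy0, hyx⟩ := interior_subset hy
    rwa [Real.deriv_sinh, cosh_le_cosh, abs_of_nonneg hy0, abs_of_nonneg hx]
  have mean_value := (convex_Icc 0 x).image_sub_le_mul_sub_of_deriv_le continuous_sinh.continuousOn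
    differentiable_sinh.differentiableOn deriv_le 0 (Set.left_mem_Icc.2 hx) x
    (Set.right_mem_Icc.2 hx) hx
  rwa [sinh_zero, sub_zero, sub_zero, mul_comm] at mean_value

lemma mul_cosh_le_one_add_mul_sinh (x : ℝ) : x * cosh x ≤ (1 + x) * sinh x := by
  have h : (2 * x + 1) * exp (-x) ≤ exp x := calc
    (2 * x + 1) * exp (-x) ≤ exp (2 * x) * exp (-x) := by gcongr; exact add_one_le_exp _
    _ = exp x := by rw [← exp_add]; ring_nf
  rw [cosh_eq, sinh_eq]
  linarith

lemma mul_exp_sub_mul_exp_neg (p q b x : ℝ) :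
    (p * (1 - b) + q) * exp x - (p * (1 + b) + q) * exp (-x)
      = 2 * ((p + q) * sinh x - p * (b * cosh x)) := by
  rw [cosh_eq, sinh_eq]
  ring

lemma mul_mul_cosh_le_of_nonpos {p q s x : ℝ} (hx : 0 ≤ x) (hs : 0 ≤ s) (hp : p ≤ 0)
    (hq : p * s ≤ p + q) : p * (s * x * cosh x) ≤ (p + q) * sinh x := calc
  p * (s * x * cosh x) = p * s * (x * cosh x) := by ring
  _ ≤ p * s * sinh x :=
    mul_le_mul_of_nonpos_left (sinh_le_mul_cosh hx) (mul_nonpos_of_nonpos_of_nonneg hp hs)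
  _ ≤ (p + q) * sinh x := mul_le_mul_of_nonneg_right hq (sinh_nonneg_iff.2 hx)

lemma mul_mul_cosh_le_of_nonneg {p q s x : ℝ} (hx : 0 ≤ x) (hs : 0 ≤ s) (hp : 0 ≤ p)
    (hq : 0 ≤ q) (hsx : s * (1 + x) ≤ 1) : p * (s * x * cosh x) ≤ (p + q) * sinh x := by
  have hsinh : 0 ≤ sinh x := sinh_nonneg_iff.2 hx
  calc
    p * (s * x * cosh x) = p * (s * (x * cosh x)) := by ring
    _ ≤ p * (s * ((1 + x) * sinh x)) := by grw [mul_cosh_le_one_add_mul_sinh x]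
    _ = p * (s * (1 + x)) * sinh x := by ring
    _ ≤ p * 1 * sinh x :=
      mul_le_mul_of_nonneg_right (mul_le_mul_of_nonneg_left hsx hp) hsinh
    _ ≤ (p + q) * sinh x := mul_le_mul_of_nonneg_right (by linarith) hsinh

theorem critical_inequality_small_a_general {μ a : ℝ} (hμ : |μ| < 1) (ha : |a| ≤ 1)
    (haμ : 0 ≤ a * μ) :
    0 ≤ ((2 * μ ^ 2 - a ^ 2 - 1) * (1 - a * μ) + 2 * μ ^ 2 * (1 - μ ^ 2))
        * exp (a * μ / (1 - μ ^ 2))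
      - ((2 * μ ^ 2 - a ^ 2 - 1) * (1 + a * μ) + 2 * μ ^ 2 * (1 - μ ^ 2))
        * exp (-(a * μ) / (1 - μ ^ 2)) := by
  have hs : 0 < 1 - μ ^ 2 := sub_pos.2 ((sq_lt_one_iff_abs_lt_one μ).2 hμ)
  have ha2 : 0 ≤ 1 - a ^ 2 := sub_nonneg.2 ((sq_le_one_iff_abs_le_one a).2 ha)
  have hx : 0 ≤ a * μ / (1 - μ ^ 2) := div_nonneg haμ hs.le
  have hsx : (1 - μ ^ 2) * (a * μ / (1 - μ ^ 2)) = a * μ := mul_div_cancel₀ _ hs.ne'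
  rw [neg_div, mul_exp_sub_mul_exp_neg]
  refine mul_nonneg zero_le_two (sub_nonneg.2 ?_)
  nth_rw 1 [← hsx]
  rcases le_total (2 * μ ^ 2 - a ^ 2 - 1) 0 with hp | hp
  · refine mul_mul_cosh_le_of_nonpos hx hs.le hp ?_
    linarith [mul_nonneg (sq_nonneg μ) ha2]
  · have haμ_le_sq : a * μ ≤ μ ^ 2 := by linarith [two_mul_le_add_sq a μ]
    refine mul_mul_cosh_le_of_nonneg hx hs.le hp (by positivity) ?_
    rw [mul_add, hsx]
    linarith

theorem critical_inequality_small_a (μ a : ℝ) (hμ0 : 0 ≤ μ) (hμ1 : μ < 1)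
    (ha0 : 0 ≤ a) (ha1 : a ≤ 1) :
    ((2*μ^2 - a^2 - 1)*(1 - a*μ) + 2*μ^2*(1 - μ^2)) * Real.exp (a*μ/(1 - μ^2))
      - ((2*μ^2 - a^2 - 1)*(1 + a*μ) + 2*μ^2*(1 - μ^2)) * Real.exp (-(a*μ)/(1 - μ^2)) ≥ 0 :=
  critical_inequality_small_a_general (abs_lt.2 ⟨by linarith, hμ1⟩) (abs_le.2 ⟨by linarith, ha1⟩)
    (mul_nonneg ha0 hμ0)
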